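/- For d odd, the orbit of e_p under the group G_d generated by the L_q equals the set of primitive vectors v ∈ ℤ^{A_d} which are congruent mod 2 to a vector of E = {ē*}∪{ē_q} and satisfy (h*)^T(v - e_p) = 0. -/

import Mathlib

open Matrix

/-- The matrix of the operator `L_p`. -/
def L (d : ℕ) (p : Fin d) : Matrix (Fin d) (Fin d) ℤ :=
  Matrix.of fun r q => if q = p then (if r < p then -1 else 1) else (if r = q then 1 else 0)

/-- The hyperelliptic Rauzy–Veech group `G_d`, generated by the operators `L_p`. -/
def Gd (d : ℕ) : Subgroup (Matrix (Fin d) (Fin d) ℤ)ˣ :=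
  Subgroup.closure {u : (Matrix (Fin d) (Fin d) ℤ)ˣ |
    ∃ p : Fin d, (u : Matrix (Fin d) (Fin d) ℤ) = L d p}

/-- The set `E = {ē*} ∪ {ē_q : q ∈ A_d}` in `(ℤ/2)^{A_d}`. -/
def Eset (d : ℕ) : Set (Fin d → ZMod 2) :=
  insert (fun _ => 1) (Set.range fun q : Fin d => Pi.single q (1 : ZMod 2))

/-- The alternating covector `h*`. -/
def hstar (d : ℕ) : Fin d → ℤ := fun i => (-1) ^ (i : ℕ)

/-- Fox-colouring braid moves on integer sequences. -/
inductive TR : List ℤ → List ℤ → Prop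
  | swap (x y : ℤ) (l : List ℤ) : TR (x :: y :: l) ((2 * x - y) :: x :: l)
  | cons (a : ℤ) {l l' : List ℤ} : TR l l' → TR (a :: l) (a :: l')
  | refl (l : List ℤ) : TR l l
  | symm {l l' : List ℤ} : TR l l' → TR l' l
  | trans {l l' l'' : List ℤ} : TR l l' → TR l' l'' → TR l l''

/-- Braid moves together with the action of `L_0`. -/
inductive FR : List ℤ → List ℤ → Prop
  | ofT {l l' : List ℤ} : TR l l' → FR l l'
  | lzero (x : ℤ) (l : List ℤ) : FR (x :: l) (x :: l.map (fun y => y + x))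
  | symm {l l' : List ℤ} : FR l l' → FR l' l
  | trans {l l' l'' : List ℤ} : FR l l' → FR l' l'' → FR l l''

/-- Double each entry. -/
def dup : List ℤ → List ℤ
  | [] => []
  | x :: l => x :: x :: dup l

theorem TR.swap' (x y : ℤ) (l : List ℤ) : TR (x :: y :: l) (y :: (2 * y - x) :: l) := by
  have h := TR.swap y (2 * y - x) l
  have e : 2 * y - (2 * y - x) = x := by ring
  rw [e] at h
  exact h.symm

theorem TR.past (a x : ℤ) (l : List ℤ) : TR (a :: x :: x :: l) (x :: x :: a :: l) := by
  refine (TR.swap' a x (x :: l)).trans (TR.cons x ?_)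
  have h := TR.swap' (2 * x - a) x l
  have e : 2 * x - (2 * x - a) = a := by ring
  rwa [e] at h

theorem TR.float (x : ℤ) (pre l : List ℤ) : TR (pre ++ x :: x :: l) (x :: x :: (pre ++ l)) := by
  induction pre with
  | nil => exact TR.refl _
  | cons a pre ih => exact (TR.cons a ih).trans (TR.past a x _)

theorem TR.euclid (n : ℕ) : ∀ (a b c : ℤ) (l : List ℤ), (a - b).natAbs + (b - c).natAbs ≤ n →
    ∃ x u, TR (a :: b :: c :: l) (x :: x :: u :: l) := by
  induction n with
  | zero =>
    intro a b c l h
    have h1 : a = b := by omega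
    subst h1
    exact ⟨a, c, TR.refl _⟩
  | succ n ih =>
    intro a b c l h
    by_cases h1 : a = b
    · subst h1
      exact ⟨a, c, TR.refl _⟩
    by_cases h2 : b = c
    · subst h2
      exact ⟨b, a, TR.past _ _ _⟩
    by_cases h3 : (a - b).natAbs ≤ (b - c).natAbs
    · by_cases h4 : (0 < a - b ↔ 0 < b - c)
      · obtain ⟨x, u, hx⟩ := ih b (2 * b - a) c l (by omega)
        exact ⟨x, u, (TR.swap' a b _).trans hx⟩
      · obtain ⟨x, u, hx⟩ := ih (2 * a - b) a c l (by omega)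
        exact ⟨x, u, (TR.swap a b _).trans hx⟩
    · by_cases h4 : (0 < a - b ↔ 0 < b - c)
      · obtain ⟨x, u, hx⟩ := ih a (2 * b - c) b l (by omega)
        exact ⟨x, u, (TR.cons a (TR.swap b c _)).trans hx⟩
      · obtain ⟨x, u, hx⟩ := ih a c (2 * c - b) l (by omega)
        exact ⟨x, u, (TR.cons a (TR.swap' b c _)).trans hx⟩

theorem TR.reduce (k : ℕ) : ∀ l : List ℤ, l.length = 2 * k + 1 →
    ∃ a xs, xs.length = k ∧ TR l (a :: dup xs) := by
  induction k with
  | zero =>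
    intro l h
    obtain ⟨a, rfl⟩ := List.length_eq_one_iff.1 (by simpa using h)
    exact ⟨a, [], rfl, TR.refl _⟩
  | succ k ih =>
    intro l h
    match l, h with
    | a :: b :: c :: l, h =>
      obtain ⟨x, u, hx⟩ := TR.euclid _ a b c l le_rfl
      obtain ⟨w, xs, hl, hw⟩ := ih (u :: l) (by simp at h ⊢; omega)
      exact ⟨w, x :: xs, by simp [hl],
        hx.trans ((TR.cons x (TR.cons x hw)).trans (TR.past w x (dup xs)).symm)⟩

theorem TR.reflPair (e x : ℤ) (l : List ℤ) :
    TR (e :: x :: x :: l) (e :: (2 * e - x) :: (2 * e - x) :: l) := by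
  refine (TR.swap e x (x :: l)).trans ((TR.cons _ (TR.swap e x l)).trans ?_)
  exact (TR.past e (2 * e - x) l).symm

theorem FR.refl (l : List ℤ) : FR l l := FR.ofT (TR.refl l)

theorem FR.negPair (e x : ℤ) (l : List ℤ) :
    FR (e :: x :: x :: l) (e :: (-x) :: (-x) :: l) := by
  have h1 := FR.lzero e (x :: x :: l)
  have h2 := FR.lzero e ((-x) :: (-x) :: l)
  simp only [List.map_cons] at h1 h2
  have h3 := FR.ofT (TR.reflPair e (x + e) (l.map (fun y => y + e)))
  have e1 : 2 * e - (x + e) = -x + e := by ring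
  rw [e1] at h3
  exact (h1.trans h3).trans h2.symm

theorem FR.shiftPair (e x : ℤ) (l : List ℤ) :
    FR (e :: x :: x :: l) (e :: (x + 2 * e) :: (x + 2 * e) :: l) := by
  have h := (FR.negPair e x l).trans (FR.ofT (TR.reflPair e (-x) l))
  have e1 : 2 * e - -x = x + 2 * e := by ring
  rwa [e1] at h

theorem FR.shiftPairs (e : ℤ) (l : List ℤ) (m : ℕ) : ∀ x : ℤ,
    FR (e :: x :: x :: l) (e :: (x + 2 * e * m) :: (x + 2 * e * m) :: l) := by
  induction m with
  | zero => intro x; simpa using FR.refl _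
  | succ m ih =>
    intro x
    have h := (ih x).trans (FR.shiftPair e _ l)
    have e1 : x + 2 * e * (m : ℤ) + 2 * e = x + 2 * e * ((m + 1 : ℕ) : ℤ) := by push_cast; ring
    rwa [e1] at h

theorem FR.changePair (e x z : ℤ) (he : e = 1 ∨ e = -1) (l : List ℤ) (h : (2 : ℤ) ∣ z - x) :
    FR (e :: x :: x :: l) (e :: z :: z :: l) := by
  obtain ⟨m, hm⟩ := h
  have key : ∀ (m : ℕ) (x z : ℤ), z - x = 2 * e * m →
      FR (e :: x :: x :: l) (e :: z :: z :: l) := by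
    intro m x z h
    have := FR.shiftPairs e l m x
    rwa [← h, add_sub_cancel] at this
  obtain ⟨n, hn⟩ := Int.eq_nat_or_neg m
  rcases hn with rfl | rfl <;> rcases he with rfl | rfl
  · exact key n _ _ (by linarith)
  · exact (key n _ _ (by linarith)).symm
  · exact (key n _ _ (by linarith)).symm
  · exact key n _ _ (by linarith)

theorem FR.change (e z : ℤ) (he : e = 1 ∨ e = -1) (xs : List ℤ) : ∀ pre : List ℤ,
    (∀ x ∈ xs, (2 : ℤ) ∣ z - x) →
    FR (e :: (pre ++ dup xs)) (e :: (pre ++ List.replicate (2 * xs.length) z)) := by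
  induction xs with
  | nil => intro pre _; simpa [dup] using FR.refl _
  | cons x xs ih =>
    intro pre h
    have h1 : FR (e :: (pre ++ x :: x :: dup xs)) (e :: (pre ++ z :: z :: dup xs)) :=
      ((FR.ofT (TR.cons e (TR.float x pre (dup xs)))).trans
        (FR.changePair e x z he _ (h x (by simp)))).trans
        (FR.ofT (TR.cons e (TR.float z pre (dup xs)))).symm
    have h2 := ih (pre ++ [z, z]) (fun y hy => h y (by simp [hy]))
    have e1 : 2 * (x :: xs).length = 2 * xs.length + 1 + 1 := by simp; ring
    rw [e1]
    simp only [List.append_assoc, List.cons_append, List.nil_append] at h2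
    exact h1.trans h2

theorem dup_length (xs : List ℤ) : (dup xs).length = 2 * xs.length := by
  induction xs with
  | nil => rfl
  | cons x xs ih => simp [dup, ih]; ring

theorem mem_dup {x : ℤ} {xs : List ℤ} (h : x ∈ xs) : x ∈ dup xs := by
  induction xs with
  | nil => simp at h
  | cons y xs ih =>
    simp only [List.mem_cons, dup] at h ⊢
    tauto

/-- Canonical form. -/
theorem FR.canon (e : ℤ) (he : e = 1 ∨ e = -1) (xs : List ℤ)
    (h : (∀ x ∈ xs, (2 : ℤ) ∣ x) ∨ (∀ x ∈ xs, ¬ (2 : ℤ) ∣ x)) :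
    FR (e :: dup xs) (e :: List.replicate (2 * xs.length) e) := by
  rcases h with h | h
  · have h1 := FR.change e 0 he xs [] (fun x hx => by have := h x hx; omega)
    have h2 := FR.lzero e (List.replicate (2 * xs.length) 0)
    simp only [List.map_replicate, zero_add] at h2
    exact h1.trans h2
  · exact FR.change e e he xs [] (fun x hx => by have := h x hx; omega)

/-- Orbit relation. -/
def Orb (d : ℕ) (v w : Fin d → ℤ) : Prop :=
  ∃ B ∈ Gd d, (B : Matrix (Fin d) (Fin d) ℤ).mulVec v = w

theorem Orb.refl {d : ℕ} (v : Fin d → ℤ) : Orb d v v := ⟨1, one_mem _, by simp⟩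

theorem Orb.symm {d : ℕ} {v w : Fin d → ℤ} (h : Orb d v w) : Orb d w v := by
  obtain ⟨B, hB, rfl⟩ := h
  exact ⟨B⁻¹, inv_mem hB, by simp⟩

theorem Orb.trans {d : ℕ} {u v w : Fin d → ℤ} (h : Orb d u v) (h' : Orb d v w) : Orb d u w := by
  obtain ⟨B, hB, rfl⟩ := h
  obtain ⟨C, hC, rfl⟩ := h'
  exact ⟨C * B, mul_mem hC hB, by simp⟩

theorem L_mulVec {d : ℕ} (p : Fin d) (v : Fin d → ℤ) (r : Fin d) :
    (L d p).mulVec v r = if r < p then v r - v p else if r = p then v r else v r + v p := by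
  have : ∀ q, L d p r q * v q = (if q = r then v q else 0) +
      (if q = p then (if r < p then -1 else if r = p then 0 else 1) * v q else 0) := by
    intro q
    simp only [L, Matrix.of_apply]
    split_ifs <;> first | (exfalso; omega) | grind
  simp only [Matrix.mulVec, dotProduct, this, Finset.sum_add_distrib, Finset.sum_ite_eq',
    Finset.mem_univ, if_true]
  split_ifs <;> ring

theorem L_unit {d : ℕ} (p : Fin d) : IsUnit (L d p) := by
  have h : L d p * (2 - L d p) = 1 := by
    apply Matrix.ext_of_mulVec_single
    intro i
    ext r
    rw [← Matrix.mulVec_mulVec, Matrix.sub_mulVec, Matrix.one_mulVec, L_mulVec]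
    have h2 : ∀ w : Fin d → ℤ, (2 : Matrix (Fin d) (Fin d) ℤ).mulVec w = fun j => 2 * w j := by
      intro w
      rw [← one_add_one_eq_two, Matrix.add_mulVec, Matrix.one_mulVec]
      ext j; simp; ring
    rw [h2]
    simp only [Pi.sub_apply, L_mulVec, lt_irrefl, if_false, if_true]
    split_ifs <;> ring
  exact (Matrix.isUnit_iff_isUnit_det _).2 (Matrix.isUnit_det_of_right_inverse h)

theorem Orb.ofL {d : ℕ} (p : Fin d) (v : Fin d → ℤ) : Orb d v ((L d p).mulVec v) := by
  obtain ⟨u, hu⟩ := L_unit p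
  exact ⟨u, Subgroup.subset_closure ⟨p, hu⟩, by rw [hu]⟩

theorem Orb.T {d : ℕ} (i j : Fin d) (hij : (i : ℕ) + 1 = j) (v w : Fin d → ℤ)
    (hi : w i = 2 * v i - v j) (hj : w j = v i) (hr : ∀ r, r ≠ i → r ≠ j → w r = v r) :
    Orb d v w := by
  obtain ⟨u, rfl⟩ : ∃ u, v = (L d i).mulVec u := by
    obtain ⟨B, hB⟩ := L_unit i
    exact ⟨(B⁻¹ : (Matrix (Fin d) (Fin d) ℤ)ˣ).1.mulVec v, by rw [← hB]; simp⟩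
  have : w = (L d i).mulVec ((L d j).mulVec u) := by
    ext r
    by_cases h1 : r = i
    · subst h1
      rw [hi]
      simp only [L_mulVec]
      grind
    by_cases h2 : r = j
    · subst h2
      rw [hj]
      simp only [L_mulVec]
      grind
    rw [hr r h1 h2]
    simp only [L_mulVec]
    grind
  rw [this]
  exact (Orb.ofL i u).symm.trans ((Orb.ofL j u).trans (Orb.ofL i _))

/-- Vector of a list. -/
def lvec (d : ℕ) (l : List ℤ) : Fin d → ℤ := fun i => l.getD i 0

theorem TR.orb {d : ℕ} {l l' : List ℤ} (h : TR l l') : l.length = l'.length ∧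
    ∀ pre : List ℤ, (pre ++ l).length = d → Orb d (lvec d (pre ++ l)) (lvec d (pre ++ l')) := by
  induction h with
  | swap x y l =>
    refine ⟨by simp, fun pre hp => ?_⟩
    simp only [List.length_append, List.length_cons] at hp
    refine Orb.T ⟨pre.length, by omega⟩ ⟨pre.length + 1, by omega⟩ rfl _ _ ?_ ?_ ?_
    · simp [lvec]
    · simp [lvec]
    · intro r h1 h2
      have h1' : (r : ℕ) ≠ pre.length := fun h => h1 (Fin.ext h)
      have h2' : (r : ℕ) ≠ pre.length + 1 := fun h => h2 (Fin.ext h)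
      simp only [lvec]
      by_cases h : (r : ℕ) < pre.length
      · rw [List.getD_append _ _ _ _ h, List.getD_append _ _ _ _ h]
      · rw [List.getD_append_right _ _ _ _ (by omega), List.getD_append_right _ _ _ _ (by omega)]
        obtain ⟨k, hk⟩ : ∃ k, (r : ℕ) - pre.length = k + 2 := ⟨r - pre.length - 2, by omega⟩
        rw [hk]
        simp
  | cons a _ ih =>
    refine ⟨by simp [ih.1], fun pre hp => ?_⟩
    have := ih.2 (pre ++ [a]) (by simpa using hp)
    simpa using this
  | refl l => exact ⟨rfl, fun pre _ => Orb.refl _⟩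
  | symm _ ih =>
    refine ⟨ih.1.symm, fun pre hp => (ih.2 pre ?_).symm⟩
    rw [← hp]; simp [ih.1]
  | trans _ _ ih1 ih2 =>
    refine ⟨ih1.1.trans ih2.1, fun pre hp => (ih1.2 pre hp).trans (ih2.2 pre ?_)⟩
    rw [← hp]; simp [ih1.1]

theorem FR.orb {d : ℕ} {l l' : List ℤ} (h : FR l l') : l.length = l'.length ∧
    (l.length = d → Orb d (lvec d l) (lvec d l')) := by
  induction h with
  | ofT h => exact ⟨(h.orb (d := d)).1, fun hl => h.orb.2 [] hl⟩
  | lzero x l =>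
    refine ⟨by simp, fun hl => ?_⟩
    simp only [List.length_cons] at hl
    have h0 : 0 < d := by omega
    convert Orb.ofL (⟨0, h0⟩ : Fin d) _ using 1
    ext r
    rw [L_mulVec]
    obtain ⟨r, hr⟩ := r
    cases r with
    | zero => simp [lvec]
    | succ r =>
      have : r < l.length := by omega
      simp [lvec, Fin.lt_def, this]
  | symm _ ih => exact ⟨ih.1.symm, fun hl => (ih.2 (ih.1.trans hl)).symm⟩
  | trans _ _ ih1 ih2 =>
    exact ⟨ih1.1.trans ih2.1, fun hl => (ih1.2 hl).trans (ih2.2 (ih1.1.symm.trans hl))⟩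

/-- `h*` as a pairing. -/
def hpair (d : ℕ) (v : Fin d → ℤ) : ℤ := ∑ i, hstar d i * v i

theorem hpair_succ_succ (n : ℕ) (v : Fin (n + 2) → ℤ) :
    hpair (n + 2) v = v 0 - v 1 + hpair n (fun i => v i.succ.succ) := by
  simp only [hpair, Fin.sum_univ_succ, hstar]
  simp [pow_succ]
  ring

theorem hpair_dup (xs : List ℤ) : hpair (2 * xs.length) (lvec _ (dup xs)) = 0 := by
  induction xs with
  | nil => simp [hpair]
  | cons x xs ih =>
    have := hpair_succ_succ (2 * xs.length) (lvec _ (dup (x :: xs)))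
    refine Eq.trans this ?_
    have e : (fun i : Fin (2 * xs.length) => lvec (2 * xs.length + 2) (dup (x :: xs)) i.succ.succ)
        = lvec _ (dup xs) := by
      ext i; simp [lvec, dup]
    rw [e, ih]
    simp [lvec, dup]

theorem hpair_canon (a : ℤ) (xs : List ℤ) :
    hpair (2 * xs.length + 1) (lvec _ (a :: dup xs)) = a := by
  have h := hpair_dup xs
  simp only [hpair] at h ⊢
  rw [Fin.sum_univ_succ]
  have : ∀ i : Fin (2 * xs.length), hstar (2 * xs.length + 1) i.succ *
      lvec (2 * xs.length + 1) (a :: dup xs) i.succ =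
      - (hstar (2 * xs.length) i * lvec _ (dup xs) i) := by
    intro i; simp [lvec, hstar, pow_succ]
  rw [Finset.sum_congr rfl (fun i _ => this i), Finset.sum_neg_distrib, h]
  simp [hstar, lvec]

/-- Parity class. -/
def red (d : ℕ) (v : Fin d → ℤ) : Fin d → ZMod 2 := fun i => (v i : ZMod 2)

theorem hpair_w (k : ℕ) : ∀ p : Fin (2 * k + 1),
    ∑ r : Fin (2 * k + 1), hstar (2 * k + 1) r *
      (if r < p then -1 else if r = p then 0 else 1) = 0 := by
  have key : ∀ n : ℕ, (∑ r ∈ Finset.range n, (-1 : ℤ) ^ r) = if Even n then 0 else 1 := by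
    intro n; exact neg_one_geom_sum
  intro p
  simp only [hstar, Fin.lt_def, Fin.ext_iff]
  rw [Fin.sum_univ_eq_sum_range (fun r : ℕ => (-1 : ℤ) ^ r *
    (if r < (p : ℕ) then -1 else if r = (p : ℕ) then 0 else 1))]
  obtain ⟨p, hp⟩ := p
  simp only
  have : ∀ n, p < n → ∑ r ∈ Finset.range n, (-1 : ℤ) ^ r *
    (if r < p then -1 else if r = p then 0 else 1) =
      (if Even n then 0 else 1) - (if Even p then 0 else 1) - (if Even (p+1) then 0 else 1) := by
    intro n hn
    rw [← key n, ← key p, ← key (p+1)]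
    have hs : ∀ m, p + 1 ≤ m → ∑ r ∈ Finset.range m, (-1 : ℤ) ^ r *
      (if r < p then -1 else if r = p then 0 else 1) = ∑ r ∈ Finset.range m, (-1 : ℤ) ^ r -
      ∑ r ∈ Finset.range p, (-1 : ℤ) ^ r - ∑ r ∈ Finset.range (p+1), (-1 : ℤ) ^ r := by
      intro m hm
      induction m, hm using Nat.le_induction with
      | base =>
        rw [Finset.sum_range_succ]
        have : ∀ r ∈ Finset.range p, (-1 : ℤ) ^ r *
          (if r < p then -1 else if r = p then 0 else 1) = - (-1 : ℤ) ^ r := by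
          intro r hr
          simp [Finset.mem_range.1 hr]
        rw [Finset.sum_congr rfl this]
        simp
      | succ m hm ih =>
        rw [Finset.sum_range_succ, ih, Finset.sum_range_succ _ m]
        have h1 : ¬ m < p := by omega
        have h2 : ¬ m = p := by omega
        simp [h1, h2]
        ring
    exact hs n hn
  rw [this _ hp]
  have : ¬ Even (2 * k + 1) := by simp
  by_cases h : Even p <;> simp [h, this, Nat.even_add_one]

theorem hpair_L {d : ℕ} (ho : Odd d) (p : Fin d) (v : Fin d → ℤ) :
    hpair d ((L d p).mulVec v) = hpair d v := by
  obtain ⟨k, rfl⟩ := ho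
  have h := hpair_w k p
  have : ∀ r, hstar (2 * k + 1) r * (L (2 * k + 1) p).mulVec v r = hstar (2 * k + 1) r * v r +
      v p * (hstar (2 * k + 1) r * (if r < p then -1 else if r = p then 0 else 1)) := by
    intro r
    rw [L_mulVec]
    split_ifs <;> ring
  simp only [hpair, this, Finset.sum_add_distrib, ← Finset.mul_sum, h, mul_zero, add_zero]

theorem red_L {d : ℕ} (p : Fin d) (v : Fin d → ℤ) (r : Fin d) :
    red d ((L d p).mulVec v) r = if r = p then red d v p else red d v r + red d v p := by
  simp only [red, L_mulVec]
  split_ifs <;> first | (exfalso; omega) | skip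
  · push_cast; rw [CharTwo.sub_eq_add]
  · subst_vars; rfl
  · push_cast; rfl

theorem red_L_mem {d : ℕ} (p : Fin d) (v : Fin d → ℤ) (h : red d v ∈ Eset d) :
    red d ((L d p).mulVec v) ∈ Eset d := by
  simp only [Eset, Set.mem_insert_iff, Set.mem_range] at h ⊢
  have two : (1 : ZMod 2) + 1 = 0 := rfl
  rcases h with h | ⟨q, h⟩
  · right
    refine ⟨p, ?_⟩
    ext r
    rw [red_L, h]
    by_cases hr : r = p
    · subst hr; simp
    · simp [hr, two]
  · by_cases hq : q = p
    · subst hq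
      left
      ext r
      rw [red_L, ← h]
      by_cases hr : r = q
      · subst hr; simp
      · simp [hr]
    · right
      refine ⟨q, ?_⟩
      ext r
      rw [red_L, ← h]
      by_cases hr : r = p
      · subst hr; simp
      · simp [hr, Ne.symm hq]

theorem red_L_twice {d : ℕ} (p : Fin d) (v : Fin d → ℤ) :
    red d ((L d p).mulVec ((L d p).mulVec v)) = red d v := by
  ext r
  rw [red_L, red_L, red_L]
  by_cases hr : r = p
  · subst hr; simp
  · simp [hr, add_assoc, CharTwo.add_self_eq_zero]

theorem Orb.inv {d : ℕ} (ho : Odd d) {v w : Fin d → ℤ} (h : Orb d v w) :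
    hpair d w = hpair d v ∧ (red d w ∈ Eset d ↔ red d v ∈ Eset d) := by
  obtain ⟨B, hB, rfl⟩ := h
  revert v
  induction hB using Subgroup.closure_induction with
  | mem x hx =>
    obtain ⟨p, hp⟩ := hx
    intro v
    rw [hp]
    refine ⟨hpair_L ho p v, fun h => ?_, red_L_mem p v⟩
    have := red_L_mem p _ h
    rwa [red_L_twice] at this
  | one => intro v; simp
  | mul x y _ _ hx hy =>
    intro v
    have h1 := hx (v := y.1.mulVec v)
    have h2 := hy (v := v)
    rw [Units.val_mul, ← Matrix.mulVec_mulVec]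
    exact ⟨h1.1.trans h2.1, h1.2.trans h2.2⟩
  | inv x _ hx =>
    intro v
    have h1 := hx (v := (x⁻¹).1.mulVec v)
    rw [Matrix.mulVec_mulVec, ← Units.val_mul, mul_inv_cancel, Units.val_one,
      Matrix.one_mulVec] at h1
    exact ⟨h1.1.symm, h1.2.symm⟩

theorem orb_canon {d : ℕ} (ho : Odd d) (v : Fin d → ℤ) (e : ℤ) (he : e = 1 ∨ e = -1)
    (hv : hpair d v = e) (hE : red d v ∈ Eset d) : Orb d v (fun _ => e) := by
  obtain ⟨k, rfl⟩ := ho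
  obtain ⟨a, xs, hl, hT⟩ := TR.reduce k (List.ofFn v) (by simp)
  subst hl
  have h1 : Orb (2 * xs.length + 1) (lvec _ (List.ofFn v)) (lvec _ (a :: dup xs)) :=
    hT.orb.2 [] (by simp)
  have ev : lvec (2 * xs.length + 1) (List.ofFn v) = v := by
    ext i; have := Nat.le_of_lt_succ i.2; simp [lvec, -List.ofFn_succ, this]
  rw [ev] at h1
  obtain ⟨i1, i2⟩ := h1.inv ⟨_, rfl⟩
  rw [hpair_canon, hv] at i1
  subst i1
  have hE' := i2.2 hE
  have hpar : (∀ x ∈ xs, (2 : ℤ) ∣ x) ∨ (∀ x ∈ xs, ¬ (2 : ℤ) ∣ x) := by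
    have hget : ∀ x ∈ xs, ∃ i : Fin (2 * xs.length), lvec (2 * xs.length + 1) (a :: dup xs) i.succ = x := by
      intro x hx
      obtain ⟨n, hn, hx⟩ := List.getElem_of_mem (mem_dup hx)
      exact ⟨⟨n, by rwa [dup_length] at hn⟩, by simp [lvec, hx, hn]⟩
    have hz : ∀ x : ℤ, (x : ZMod 2) = 0 ↔ (2 : ℤ) ∣ x := fun x =>
      ZMod.intCast_zmod_eq_zero_iff_dvd x 2
    simp only [Eset, Set.mem_insert_iff, Set.mem_range] at hE'
    rcases hE' with h | ⟨q, h⟩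
    · right
      intro x hx
      obtain ⟨i, hi⟩ := hget x hx
      have := congrFun h i.succ
      simp only [red, hi] at this
      rw [← hz, this]
      decide
    · left
      have hq : q = 0 := by
        by_contra hq
        have := congrFun h 0
        simp only [red, Pi.single_apply, Ne.symm hq, if_false] at this
        have h3 := (hz _).1 this.symm
        simp [lvec] at h3
        omega
      subst hq
      intro x hx
      obtain ⟨i, hi⟩ := hget x hx
      have := congrFun h i.succ
      simp only [red, hi] at this
      rw [← hz, ← this]
      simp
  have h2 := ((FR.canon a he xs hpar).orb (d := 2 * xs.length + 1)).2 (by simp [dup_length])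
  have e2 : lvec (2 * xs.length + 1) (a :: List.replicate (2 * xs.length) a) = fun _ => a := by
    rw [← List.replicate_succ]
    ext i
    simp [lvec, List.getElem?_replicate, i.2]
  rw [e2] at h2
  exact h1.trans h2

theorem hpair_single {d : ℕ} (p : Fin d) : hpair d (Pi.single p 1) = (-1) ^ (p : ℕ) := by
  simp [hpair, hstar, Pi.single_apply]

theorem red_single {d : ℕ} (p : Fin d) : red d (Pi.single p 1) ∈ Eset d := by
  right
  refine ⟨p, ?_⟩
  ext r
  by_cases h : r = p
  · subst h; simp [red]
  · simp [red, h]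

/-- For `d` odd, the orbit of `e_p` under `G_d` is the set of primitive vectors of
`ℤ^{A_d}` congruent mod 2 to a vector of `E` and satisfying `(h*)ᵀ (v - e_p) = 0`. -/
theorem orbit_odd (d : ℕ) (hd : 3 ≤ d) (ho : Odd d) (p : Fin d) :
    {v : Fin d → ℤ | ∃ B ∈ Gd d,
        (B : Matrix (Fin d) (Fin d) ℤ).mulVec (Pi.single p 1) = v} =
      {v : Fin d → ℤ | Finset.univ.gcd v = 1 ∧ (fun i => (v i : ZMod 2)) ∈ Eset d ∧
        ∑ i : Fin d, hstar d i * (v i - (Pi.single p 1 : Fin d → ℤ) i) = 0} := by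
  have he : ((-1 : ℤ) ^ (p : ℕ)) = 1 ∨ ((-1 : ℤ) ^ (p : ℕ)) = -1 := neg_one_pow_eq_or ℤ _
  have hsum : ∀ v : Fin d → ℤ,
      ∑ i : Fin d, hstar d i * (v i - (Pi.single p 1 : Fin d → ℤ) i) =
        hpair d v - hpair d (Pi.single p 1) := by
    intro v
    simp only [hpair, mul_sub, Finset.sum_sub_distrib]
  ext v
  simp only [Set.mem_setOf_eq]
  rw [hsum, sub_eq_zero]
  constructor
  · intro h
    obtain ⟨h1, h2⟩ := Orb.inv ho (show Orb d (Pi.single p 1) v from h)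
    refine ⟨?_, h2.2 (red_single p), h1⟩
    have hdvd : Finset.univ.gcd v ∣ hpair d v :=
      Finset.dvd_sum fun i hi => Dvd.dvd.mul_left (Finset.gcd_dvd hi) _
    rw [h1, hpair_single] at hdvd
    have hu : IsUnit (Finset.univ.gcd v) := by
      apply isUnit_of_dvd_unit hdvd
      rcases he with h | h <;> rw [h] <;> simp
    rw [← Finset.normalize_gcd]
    exact normalize_eq_one.2 hu
  · rintro ⟨_, h2, h3⟩
    have a1 := orb_canon ho v _ he (h3.trans (hpair_single p)) h2
    have a2 := orb_canon ho (Pi.single p 1) _ he (hpair_single p) (red_single p)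
    exact a2.trans a1.symm
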